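/- Every set P of n points in the plane in general orthogonal position (no two points share an x- or y-coordinate) that forms a 'diagonal' point set — i.e., when sorted by increasing x-coordinate, the y-coordinates are strictly decreasing — admits a planar L-shaped drawing of any tree with n nodes and maximum degree 4, where each vertex is placed on a distinct point and each edge is an axis-parallel path with exactly one bend, and no two edges cross. -/

import Mathlib

/-- The L-shaped (one-bend orthogonal) path from `p` to `q`: a horizontal and a vertical
segment meeting at the bend, which is `(p.1, q.2)` if `b` and `(q.1, p.2)` otherwise. -/
def Lpath (p q : ℝ × ℝ) (b : Bool) : Set (ℝ × ℝ) :=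
  segment ℝ p (if b then (p.1, q.2) else (q.1, p.2)) ∪
    segment ℝ (if b then (p.1, q.2) else (q.1, p.2)) q

/-!
Place the vertices on a line and colour the edges with two pages. On a diagonal point set, drawn
in that order, the edges of the first page run below the diagonal of points and those of the
second page above it, and each vertex has four ports: left and down on the first page, up and
right on the second. Such a drawing is planar as soon as edges of the same page do not cross in
the book-embedding sense and every port is used at most once. For a forest of maximum degree four
this is achieved by adding the vertices one by one, each having at most one neighbour `u` among its
predecessors: `u` still has a free port, and placing the new vertex next to `u`, on the side
of that port, creates no crossing.
-/

variable {V : Type*}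

section PortLayout

variable {α : Type*} [LinearOrder α] {G : SimpleGraph V}

/-- The port at which the edge `uw` leaves `u`, for positions `f` and pages `c`: the page of the
edge together with the direction in which `w` lies, `true` standing for the right. -/
def port (f : V → α) (c : Sym2 V → Bool) (u w : V) : Bool × Bool :=
  (c s(u, w), decide (f u < f w))

/-- A two-page book embedding of the subgraph of `G` induced on `S`, with positions `f` on the spine
and pages `c`, in which no two edges share a port. -/
structure IsPortLayout (G : SimpleGraph V) (S : Set V) (f : V → α) (c : Sym2 V → Bool) :
    Prop where
  injOn : S.InjOn f
  port_injOn : ∀ u ∈ S, (G.neighborSet u ∩ S).InjOn (port f c u)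
  noncrossing : ∀ ⦃u⦄, u ∈ S → ∀ ⦃v⦄, v ∈ S → ∀ ⦃x⦄, x ∈ S → ∀ ⦃y⦄, y ∈ S →
    G.Adj u v → G.Adj x y → f u < f x → f x < f v → f v < f y → c s(u, v) ≠ c s(x, y)

theorem IsPortLayout.of_lt_iff_lt {β : Type*} [LinearOrder β] {S : Set V} {f : V → α} {g : V → β}
    {c : Sym2 V → Bool} (h : IsPortLayout G S f c) (hfg : ∀ u v, g u < g v ↔ f u < f v) :
    IsPortLayout G S g c where
  injOn u hu v hv huv := by
    have hle : ∀ x y, g x ≤ g y ↔ f x ≤ f y := fun x y => by simpa using (hfg y x).not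
    exact h.injOn hu hv (le_antisymm ((hle u v).1 huv.le) ((hle v u).1 huv.ge))
  port_injOn u hu v hv w hw hvw := h.port_injOn u hu hv hw (by simpa only [port, hfg] using hvw)
  noncrossing := by simpa only [hfg] using h.noncrossing

theorem exists_free_port {S : Finset V} (f : V → α) (c : Sym2 V → Bool) {u v : V}
    [Fintype (G.neighborSet u)] (hdeg : G.degree u ≤ 4) (huv : G.Adj u v) (hv : v ∉ S) :
    ∃ a : Bool × Bool, ∀ w ∈ S, G.Adj u w → port f c u w ≠ a := by
  classical
  let N := {w ∈ G.neighborFinset u | w ∈ S}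
  have hN : N.card < 4 :=
    (Finset.card_lt_card (Finset.filter_ssubset.2 ⟨v, by simpa using huv, hv⟩)).trans_le hdeg
  obtain ⟨a, -, ha⟩ : ∃ a ∈ (Finset.univ : Finset (Bool × Bool)), a ∉ N.image (port f c u) :=
    Finset.exists_mem_notMem_of_card_lt_card (Finset.card_image_le.trans_lt (by simpa using hN))
  exact ⟨a, fun w hw huw hwa => ha (Finset.mem_image.2 ⟨w, by simp [N, hw, huw], hwa⟩)⟩

end PortLayout

section Insertion

variable {G : SimpleGraph V} {S : Set V} {u v : V}

theorem insert_adj_cases (hleaf : ∀ w ∈ S, G.Adj v w → w = u) {x y : V} (hxy : G.Adj x y)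
    (hx : x ∈ insert v S) (hy : y ∈ insert v S) :
    (x ∈ S ∧ y ∈ S) ∨ (x = u ∧ y = v) ∨ (x = v ∧ y = u) := by
  have := hxy.symm
  have := hxy.ne
  grind

variable [DecidableEq V] {f : V → ℤ} {c : Sym2 V → Bool}

/-- The positions `f` with `v` moved next to `u`: to its right if `right`, to its left
otherwise. All other positions are doubled, which makes room for `v`. -/
def insertBeside (f : V → ℤ) (u v : V) (right : Bool) : V → ℤ :=
  Function.update (fun x => 2 * f x) v (2 * f u + if right then 1 else -1)

theorem insertBeside_self (f : V → ℤ) (u v : V) (right : Bool) :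
    insertBeside f u v right v = 2 * f u + if right then 1 else -1 :=
  Function.update_self ..

theorem insertBeside_of_ne (f : V → ℤ) (u : V) {v x : V} (right : Bool) (hx : x ≠ v) :
    insertBeside f u v right x = 2 * f x :=
  Function.update_of_ne hx ..

theorem insertBeside_lt_iff (f : V → ℤ) (u : V) {v x y : V} (right : Bool) (hx : x ≠ v)
    (hy : y ≠ v) : insertBeside f u v right x < insertBeside f u v right y ↔ f x < f y := by
  rw [insertBeside_of_ne f u right hx, insertBeside_of_ne f u right hy]
  lia

theorem insertBeside_injOn (hf : S.InjOn f) (hv : v ∉ S) (right : Bool) :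
    (insert v S).InjOn (insertBeside f u v right) := by
  refine (Set.injOn_insert hv).2 ⟨fun x hx y hy hxy => hf hx hy ?_, ?_⟩
  · rw [insertBeside_of_ne f u right (ne_of_mem_of_not_mem hx hv),
      insertBeside_of_ne f u right (ne_of_mem_of_not_mem hy hv)] at hxy
    lia
  · rintro ⟨x, hx, hxv⟩
    rw [insertBeside_self, insertBeside_of_ne f u right (ne_of_mem_of_not_mem hx hv)] at hxv
    grind

theorem port_insertBeside_of_mem (hv : v ∉ S) (a : Bool × Bool) {x y : V} (hx : x ∈ S)
    (hy : y ∈ S) :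
    port (insertBeside f u v a.2) (Function.update c s(u, v) a.1) x y = port f c x y := by
  have hxv := ne_of_mem_of_not_mem hx hv
  have hyv := ne_of_mem_of_not_mem hy hv
  have hxy : s(x, y) ≠ s(u, v) := by grind
  simp [port, Function.update_of_ne hxy, insertBeside_lt_iff f u a.2 hxv hyv]

theorem port_insertBeside_self (f : V → ℤ) (c : Sym2 V → Bool) (huv : u ≠ v) (a : Bool × Bool) :
    port (insertBeside f u v a.2) (Function.update c s(u, v) a.1) u v = a := by
  obtain ⟨b, right⟩ := a
  cases right <;> simp [port, insertBeside_self, insertBeside_of_ne f u _ huv]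

theorem IsPortLayout.port_injOn_insert (h : IsPortLayout G S f c) (hv : v ∉ S)
    (hleaf : ∀ w ∈ S, G.Adj v w → w = u) {a : Bool × Bool}
    (hfree : G.Adj u v → ∀ w ∈ S, G.Adj u w → port f c u w ≠ a) {x : V} (hx : x ∈ insert v S) :
    (G.neighborSet x ∩ insert v S).InjOn
      (port (insertBeside f u v a.2) (Function.update c s(u, v) a.1) x) := by
  have hne : G.Adj u v → u ∈ S → ∀ w ∈ S, G.Adj u w →
      port (insertBeside f u v a.2) (Function.update c s(u, v) a.1) u w ≠
        port (insertBeside f u v a.2) (Function.update c s(u, v) a.1) u v := by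
    intro huv hu w hw huw
    rw [port_insertBeside_of_mem hv a hu hw, port_insertBeside_self f c huv.ne a]
    exact hfree huv w hw huw
  rintro y ⟨hxy : G.Adj x y, hy⟩ z ⟨hxz : G.Adj x z, hz⟩ hport
  rcases insert_adj_cases hleaf hxy hx hy with ⟨hxS, hyS⟩ | ⟨rfl, rfl⟩ | ⟨rfl, rfl⟩ <;>
    rcases insert_adj_cases hleaf hxz hx hz with ⟨hxS', hzS⟩ | ⟨hxu, rfl⟩ | ⟨hxv, rfl⟩
  · rw [port_insertBeside_of_mem hv a hxS hyS, port_insertBeside_of_mem hv a hxS hzS] at hport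
    exact h.port_injOn x hxS ⟨hxy, hyS⟩ ⟨hxz, hzS⟩ hport
  · subst hxu
    exact absurd hport (hne hxz hxS y hyS hxy)
  · exact absurd hxS (hxv ▸ hv)
  · exact absurd hport.symm (hne hxy hxS' z hzS hxz)
  · rfl
  · exact absurd hxv hxy.ne
  · exact absurd hxS' hv
  · exact absurd hxu hxy.ne
  · rfl

theorem insertBeside_le_add_one (hleaf : ∀ w ∈ S, G.Adj v w → w = u) (right : Bool) {x y : V}
    (hxy : G.Adj x y) (hx : x ∈ insert v S) (hy : y ∈ insert v S) (hS : ¬(x ∈ S ∧ y ∈ S)) :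
    insertBeside f u v right y ≤ insertBeside f u v right x + 1 := by
  rcases (insert_adj_cases hleaf hxy hx hy).resolve_left hS with ⟨rfl, rfl⟩ | ⟨rfl, rfl⟩
  · rw [insertBeside_self, insertBeside_of_ne f _ right hxy.ne]
    grind
  · rw [insertBeside_self, insertBeside_of_ne f _ right hxy.ne']
    grind

theorem IsPortLayout.insert (h : IsPortLayout G S f c) (hv : v ∉ S)
    (hleaf : ∀ w ∈ S, G.Adj v w → w = u) {a : Bool × Bool}
    (hfree : G.Adj u v → ∀ w ∈ S, G.Adj u w → port f c u w ≠ a) :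
    IsPortLayout G (insert v S) (insertBeside f u v a.2) (Function.update c s(u, v) a.1) where
  injOn := insertBeside_injOn h.injOn hv a.2
  port_injOn _ hx := h.port_injOn_insert hv hleaf hfree hx
  noncrossing x hx y hy z hz w hw hxy hzw hxz hzy hyw := by
    obtain ⟨hxS, hyS⟩ : x ∈ S ∧ y ∈ S := by
      by_contra hS
      have := insertBeside_le_add_one (f := f) hleaf a.2 hxy hx hy hS
      lia
    obtain ⟨hzS, hwS⟩ : z ∈ S ∧ w ∈ S := by
      by_contra hS
      have := insertBeside_le_add_one (f := f) hleaf a.2 hzw hz hw hS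
      lia
    have hvne : ∀ {t}, t ∈ S → t ≠ v := fun ht => ne_of_mem_of_not_mem ht hv
    have hpage : ∀ {s t}, s ∈ S → t ∈ S → s(s, t) ≠ s(u, v) := by grind
    rw [insertBeside_lt_iff f u a.2 (hvne ‹_›) (hvne ‹_›)] at hxz hzy hyw
    rw [Function.update_of_ne (hpage hxS hyS), Function.update_of_ne (hpage hzS hwS)]
    exact h.noncrossing hxS hyS hzS hwS hxy hzw hxz hzy hyw

end Insertion

section Forest

variable {G : SimpleGraph V}

theorem exists_forall_adj_imp_eq [Nonempty V] [Finite G.edgeSet] (hG : G.IsAcyclic) :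
    ∃ v u, ∀ w, G.Adj v w → w = u := by
  obtain ⟨v, x, p, hp, hmax⟩ :=
    SimpleGraph.Walk.exists_isPath_forall_isPath_length_le_length G
  refine ⟨v, p.snd, fun w hvw => hG.eq_snd_of_adj_start hp hvw ?_⟩
  by_contra hw
  simpa using hmax _ _ _ (hp.cons hw (h := hvw.symm))

theorem exists_isPortLayout_of_isAcyclic [G.LocallyFinite] (hG : G.IsAcyclic)
    (hdeg : ∀ v, G.degree v ≤ 4) (S : Finset V) :
    ∃ (f : V → ℤ) (c : Sym2 V → Bool), IsPortLayout G (S : Set V) f c := by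
  classical
  induction S using Finset.strongInduction with
  | H S ih =>
    rcases S.eq_empty_or_nonempty with rfl | hS
    · exact ⟨0, fun _ => true, by simp, by simp, by simp⟩
    have := hS.to_subtype
    obtain ⟨⟨v, hv⟩, ⟨u, _⟩, hleaf⟩ := exists_forall_adj_imp_eq (hG.induce (S : Set V))
    have hleaf' : ∀ w ∈ S.erase v, G.Adj v w → w = u := fun w hw hvw =>
      congrArg Subtype.val (hleaf ⟨w, Finset.mem_of_mem_erase hw⟩ hvw)
    obtain ⟨f, c, h⟩ := ih _ (Finset.erase_ssubset hv)
    have hv' := Finset.notMem_erase v S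
    obtain ⟨a, ha⟩ : ∃ a, G.Adj u v → ∀ w ∈ S.erase v, G.Adj u w → port f c u w ≠ a := by
      by_cases huv : G.Adj u v
      · exact (exists_free_port f c (hdeg u) huv hv').imp fun _ ha _ => ha
      · exact ⟨default, fun huv' => absurd huv' huv⟩
    have := h.insert hv' hleaf' ha
    rw [← Finset.coe_insert, Finset.insert_erase hv] at this
    exact ⟨_, _, this⟩

end Forest

section Points

theorem exists_bijOn_forall_lt_iff_lt [Fintype V] {α β γ : Type*} [LinearOrder α] [LinearOrder γ]
    {f : V → α} (hf : f.Injective) {s : Finset β} {g : β → γ} (hg : Set.InjOn g s)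
    (hcard : s.card = Fintype.card V) :
    ∃ φ : V → β, Set.BijOn φ Set.univ s ∧ ∀ u v, g (φ u) < g (φ v) ↔ f u < f v := by
  let _ : LinearOrder V := LinearOrder.lift' f hf
  let _ : LinearOrder s := LinearOrder.lift' (fun b => g b) hg.injective
  let e : V ≃o s := (monoEquivOfFin V rfl).symm.trans (monoEquivOfFin s (by simpa using hcard))
  refine ⟨fun v => e v, ⟨fun v _ => (e v).2, fun u _ v _ huv => e.injective (Subtype.ext huv),
    fun b hb => ⟨e.symm ⟨b, hb⟩, trivial, by simp⟩⟩, fun u v => e.lt_iff_lt⟩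

/-- Diagonal point sets: no two points share an abscissa, and the ordinates strictly decrease as
the abscissae increase. -/
structure IsDiagonal (D : Set (ℝ × ℝ)) : Prop where
  injOn_fst : D.InjOn Prod.fst
  snd_lt_snd : ∀ ⦃p⦄, p ∈ D → ∀ ⦃q⦄, q ∈ D → p.1 < q.1 → q.2 < p.2

theorem IsDiagonal.snd_le_snd_iff {D : Set (ℝ × ℝ)} (hD : IsDiagonal D) {p q : ℝ × ℝ} (hp : p ∈ D)
    (hq : q ∈ D) : q.2 ≤ p.2 ↔ p.1 ≤ q.1 := by
  refine ⟨fun h => not_lt.1 fun hlt => (hD.snd_lt_snd hq hp hlt).not_ge h, fun h => ?_⟩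
  rcases h.lt_or_eq with hlt | heq
  · exact (hD.snd_lt_snd hp hq hlt).le
  · rw [hD.injOn_fst hp hq heq]

theorem IsDiagonal.injOn_snd {D : Set (ℝ × ℝ)} (hD : IsDiagonal D) : D.InjOn Prod.snd :=
  fun _ hp _ hq hpq => hD.injOn_fst hp hq
    (((hD.snd_le_snd_iff hp hq).1 hpq.ge).antisymm ((hD.snd_le_snd_iff hq hp).1 hpq.le))

theorem Lpath_comm (p q : ℝ × ℝ) (b : Bool) : Lpath p q b = Lpath q p (!b) := by
  cases b <;> simp [Lpath, segment_symm ℝ q, segment_symm ℝ _ p, Set.union_comm]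

theorem mem_Lpath_true {p q z : ℝ × ℝ} :
    z ∈ Lpath p q true ↔ z ∈ Set.uIcc p q ∧ (z.1 = p.1 ∨ z.2 = q.2) := by
  obtain ⟨a, b⟩ := p
  obtain ⟨c, d⟩ := q
  obtain ⟨x, y⟩ := z
  simp only [Lpath, if_true, Set.mem_union, ← Prod.image_mk_segment_left,
    ← Prod.image_mk_segment_right, segment_eq_uIcc, ← Set.uIcc_prod_uIcc, Set.mem_prod,
    Set.mem_image, Prod.mk.injEq]
  grind [Set.left_mem_uIcc, Set.right_mem_uIcc]

theorem mem_Lpath_false {p q z : ℝ × ℝ} :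
    z ∈ Lpath p q false ↔ z ∈ Set.uIcc p q ∧ (z.1 = q.1 ∨ z.2 = p.2) := by
  rw [Lpath_comm, Bool.not_false, mem_Lpath_true, Set.uIcc_comm]

theorem Lpath_subset_uIcc (p q : ℝ × ℝ) : ∀ b, Lpath p q b ⊆ Set.uIcc p q
  | true => fun _ hz => (mem_Lpath_true.1 hz).1
  | false => fun _ hz => (mem_Lpath_false.1 hz).1

theorem IsDiagonal.mem_uIcc_iff {D : Set (ℝ × ℝ)} (hD : IsDiagonal D) {p q z : ℝ × ℝ}
    (hp : p ∈ D) (hq : q ∈ D) (hpq : p.1 < q.1) :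
    z ∈ Set.uIcc p q ↔ (p.1 ≤ z.1 ∧ z.1 ≤ q.1) ∧ q.2 ≤ z.2 ∧ z.2 ≤ p.2 := by
  rw [← Set.uIcc_prod_uIcc, Set.mem_prod, Set.uIcc_of_lt hpq,
    Set.uIcc_of_gt (hD.snd_lt_snd hp hq hpq), Set.mem_Icc, Set.mem_Icc]

theorem IsDiagonal.uIcc_inter_uIcc_subset {D : Set (ℝ × ℝ)} (hD : IsDiagonal D) {p q r : ℝ × ℝ}
    (hp : p ∈ D) (hq : q ∈ D) (hr : r ∈ D) (hpq : p.1 < q.1) (hqr : q.1 < r.1) :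
    Set.uIcc p q ∩ Set.uIcc q r ⊆ {q} := by
  rintro z ⟨hz, hz'⟩
  rw [hD.mem_uIcc_iff hp hq hpq] at hz
  rw [hD.mem_uIcc_iff hq hr hqr] at hz'
  exact Prod.ext (hz.1.2.antisymm hz'.1.1) (hz'.2.2.antisymm hz.2.1)

theorem IsDiagonal.Lpath_true_inter_Lpath_false_subset {D : Set (ℝ × ℝ)} (hD : IsDiagonal D)
    {p q r s : ℝ × ℝ} (hp : p ∈ D) (hq : q ∈ D) (hr : r ∈ D) (hs : s ∈ D) (hpq : p.1 < q.1)
    (hrs : r.1 < s.1) : Lpath p q true ∩ Lpath r s false ⊆ {p, q} ∩ {r, s} := by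
  rintro z ⟨hz, hz'⟩
  obtain ⟨hzpq, hz⟩ := mem_Lpath_true.1 hz
  obtain ⟨hzrs, hz'⟩ := mem_Lpath_false.1 hz'
  obtain ⟨⟨-, hzq⟩, -, hzp⟩ := (hD.mem_uIcc_iff hp hq hpq).1 hzpq
  obtain ⟨⟨hrz, -⟩, hsz, -⟩ := (hD.mem_uIcc_iff hr hs hrs).1 hzrs
  have heq : ∀ a ∈ D, ∀ b ∈ D, a.1 ≤ b.1 → a.2 ≤ b.2 → a = b := fun a ha b hb h₁ h₂ =>
    hD.injOn_fst ha hb (h₁.antisymm ((hD.snd_le_snd_iff hb ha).1 h₂))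
  rcases hz with hzp₁ | hzq₂ <;> rcases hz' with hzs₁ | hzr₂
  · obtain rfl : p = s := hD.injOn_fst hp hs (hzp₁.symm.trans hzs₁)
    obtain rfl : z = p := hD.uIcc_inter_uIcc_subset hr hp hq hrs hpq ⟨hzrs, hzpq⟩
    simp
  · obtain rfl : r = p := heq r hr p hp (hzp₁ ▸ hrz) (hzr₂ ▸ hzp)
    obtain rfl : z = r := Prod.ext hzp₁ hzr₂
    simp
  · obtain rfl : s = q := heq s hs q hq (hzs₁ ▸ hzq) (hzq₂ ▸ hsz)
    obtain rfl : z = s := Prod.ext hzs₁ hzq₂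
    simp
  · obtain rfl : q = r := hD.injOn_snd hq hr (hzq₂.symm.trans hzr₂)
    obtain rfl : z = q := hD.uIcc_inter_uIcc_subset hp hq hs hpq hrs ⟨hzpq, hzrs⟩
    simp

theorem eq_of_not_crossing {α β : Type*} [PartialOrder α] {D : Set β} {x : β → α}
    (hx : D.InjOn x) {p q r s : β} (hp : p ∈ D) (hq : q ∈ D) (hr : r ∈ D) (hs : s ∈ D)
    (hpr : p ≠ r) (hqs : q ≠ s) (hcross : x r < x p → x p < x s → ¬x s < x q)
    (hrp : x r ≤ x p) (hps : x p ≤ x s) (hsq : x s ≤ x q) : p = s := by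
  by_contra hne
  exact hcross (hrp.lt_of_ne (hx.ne hr hp hpr.symm)) (hps.lt_of_ne (hx.ne hp hs hne))
    (hsq.lt_of_ne (hx.ne hs hq hqs.symm))

theorem IsDiagonal.Lpath_inter_Lpath_subset {D : Set (ℝ × ℝ)} (hD : IsDiagonal D)
    {p q r s : ℝ × ℝ} (hp : p ∈ D) (hq : q ∈ D) (hr : r ∈ D) (hs : s ∈ D) (hpq : p.1 < q.1)
    (hrs : r.1 < s.1) (hpr : p ≠ r) (hqs : q ≠ s)
    (hcross : p.1 < r.1 → r.1 < q.1 → ¬q.1 < s.1)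
    (hcross' : r.1 < p.1 → p.1 < s.1 → ¬s.1 < q.1) (b : Bool) :
    Lpath p q b ∩ Lpath r s b ⊆ {p, q} ∩ {r, s} := by
  rintro z ⟨hz, hz'⟩
  have hzpq : z ∈ Set.uIcc p q := Lpath_subset_uIcc p q b hz
  have hzrs : z ∈ Set.uIcc r s := Lpath_subset_uIcc r s b hz'
  obtain ⟨⟨hpz, hzq⟩, hqz, hzp⟩ := (hD.mem_uIcc_iff hp hq hpq).1 hzpq
  obtain ⟨⟨hrz, hzs⟩, hsz, hzr⟩ := (hD.mem_uIcc_iff hr hs hrs).1 hzrs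
  have hps := eq_of_not_crossing hD.injOn_fst hp hq hr hs hpr hqs hcross'
  have hrq := eq_of_not_crossing hD.injOn_fst hr hs hp hq hpr.symm hqs.symm hcross
  have hmeet : p = s ∨ r = q := by
    cases b
    · rcases (mem_Lpath_false.1 hz).2 with hzq₁ | hzp₂ <;>
        rcases (mem_Lpath_false.1 hz').2 with hzs₁ | hzr₂
      · exact absurd (hD.injOn_fst hq hs (hzq₁.symm.trans hzs₁)) hqs
      · exact .inr (hrq ((hD.snd_le_snd_iff hp hr).1 (hzr₂ ▸ hzp))
          ((hD.snd_le_snd_iff hr hq).1 (hzr₂ ▸ hqz)) (hzq₁ ▸ hzs))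
      · exact .inl (hps ((hD.snd_le_snd_iff hr hp).1 (hzp₂ ▸ hzr))
          ((hD.snd_le_snd_iff hp hs).1 (hzp₂ ▸ hsz)) (hzs₁ ▸ hzq))
      · exact absurd (hD.injOn_snd hp hr (hzp₂.symm.trans hzr₂)) hpr
    · rcases (mem_Lpath_true.1 hz).2 with hzp₁ | hzq₂ <;>
        rcases (mem_Lpath_true.1 hz').2 with hzr₁ | hzs₂
      · exact absurd (hD.injOn_fst hp hr (hzp₁.symm.trans hzr₁)) hpr
      · exact .inl (hps (hzp₁ ▸ hrz) (hzp₁ ▸ hzs) ((hD.snd_le_snd_iff hs hq).1 (hzs₂ ▸ hqz)))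
      · exact .inr (hrq (hzr₁ ▸ hpz) (hzr₁ ▸ hzq) ((hD.snd_le_snd_iff hq hs).1 (hzq₂ ▸ hsz)))
      · exact absurd (hD.injOn_snd hq hs (hzq₂.symm.trans hzs₂)) hqs
  rcases hmeet with rfl | rfl
  · obtain rfl : z = p := hD.uIcc_inter_uIcc_subset hr hp hq hrs hpq ⟨hzrs, hzpq⟩
    simp
  · obtain rfl : z = r := hD.uIcc_inter_uIcc_subset hp hr hs hpq hrs ⟨hzpq, hzrs⟩
    simp

end Points

section Drawing

variable {G : SimpleGraph V} {φ : V → ℝ × ℝ} {c : Sym2 V → Bool}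

theorem IsPortLayout.Lpath_inter_subset (h : IsPortLayout G Set.univ (fun v => (φ v).1) c)
    (hφ : IsDiagonal (Set.range φ)) {u v x y : V} (huv : G.Adj u v) (hxy : G.Adj x y)
    (hne : ({u, v} : Set V) ≠ {x, y}) (hu : (φ u).1 < (φ v).1) (hx : (φ x).1 < (φ y).1) :
    Lpath (φ u) (φ v) (c s(u, v)) ∩ Lpath (φ x) (φ y) (c s(x, y)) ⊆
      φ '' (({u, v} : Set V) ∩ {x, y}) := by
  have hinj : φ.Injective := fun a b hab => h.injOn trivial trivial (congrArg Prod.fst hab)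
  have hmem : ∀ a, φ a ∈ Set.range φ := Set.mem_range_self
  rw [Set.image_inter hinj, Set.image_pair, Set.image_pair]
  by_cases hc : c s(u, v) = c s(x, y)
  · have hsource : u ≠ x := by
      rintro rfl
      have hvy : v = y := h.port_injOn u trivial ⟨huv, trivial⟩ ⟨hxy, trivial⟩
        (by simp [port, hc, hu, hx])
      exact hne (by rw [hvy])
    have htarget : v ≠ y := by
      rintro rfl
      have hux : u = x := h.port_injOn v trivial ⟨huv.symm, trivial⟩ ⟨hxy.symm, trivial⟩
        (by simp [port, Sym2.eq_swap (a := v), hc, hu.not_gt, hx.not_gt])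
      exact hne (by rw [hux])
    rw [← hc]
    exact hφ.Lpath_inter_Lpath_subset (hmem u) (hmem v) (hmem x) (hmem y) hu hx
      (hinj.ne hsource) (hinj.ne htarget)
      (fun h₁ h₂ h₃ => h.noncrossing trivial trivial trivial trivial huv hxy h₁ h₂ h₃ hc)
      (fun h₁ h₂ h₃ => h.noncrossing trivial trivial trivial trivial hxy huv h₁ h₂ h₃ hc.symm) _
  · cases hc₁ : c s(u, v) <;> cases hc₂ : c s(x, y)
    · simp_all
    · rw [Set.inter_comm, Set.inter_comm {φ u, φ v}]
      exact hφ.Lpath_true_inter_Lpath_false_subset (hmem x) (hmem y) (hmem u) (hmem v) hx hu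
    · exact hφ.Lpath_true_inter_Lpath_false_subset (hmem u) (hmem v) (hmem x) (hmem y) hu hx
    · simp_all

theorem IsPortLayout.exists_planar_bend (h : IsPortLayout G Set.univ (fun v => (φ v).1) c)
    (hφ : IsDiagonal (Set.range φ)) :
    ∃ bend : V → V → Bool,
      (∀ u v, G.Adj u v → Lpath (φ u) (φ v) (bend u v) = Lpath (φ v) (φ u) (bend v u)) ∧
      ∀ u v x y, G.Adj u v → G.Adj x y → ({u, v} : Set V) ≠ {x, y} →
        Lpath (φ u) (φ v) (bend u v) ∩ Lpath (φ x) (φ y) (bend x y) ⊆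
          φ '' (({u, v} : Set V) ∩ {x, y}) := by
  have hcmp : ∀ {u v}, G.Adj u v → (φ u).1 < (φ v).1 ∨ (φ v).1 < (φ u).1 := fun huv =>
    (h.injOn.ne trivial trivial huv.ne).lt_or_gt
  -- Page `true` lies below the points; traversing an edge from right to left swaps the two bends.
  let bend u v := if (φ u).1 < (φ v).1 then c s(u, v) else !c s(u, v)
  have hbend : ∀ {u v}, G.Adj u v → bend v u = !bend u v := fun {u v} huv => by
    rcases hcmp huv with hlt | hlt <;> simp [bend, hlt, hlt.not_gt, Sym2.eq_swap (a := v)]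
  have hsymm : ∀ u v, G.Adj u v →
      Lpath (φ u) (φ v) (bend u v) = Lpath (φ v) (φ u) (bend v u) := fun u v huv => by
    rw [Lpath_comm, hbend huv]
  refine ⟨bend, hsymm, fun u v x y huv hxy hne => ?_⟩
  wlog hu : (φ u).1 < (φ v).1 generalizing u v
  · rw [hsymm u v huv, Set.pair_comm u v]
    exact this v u huv.symm (by rwa [Set.pair_comm]) ((hcmp huv).resolve_left hu)
  wlog hx : (φ x).1 < (φ y).1 generalizing x y
  · rw [hsymm x y hxy, Set.pair_comm x y]
    exact this y x hxy.symm (by rwa [Set.pair_comm y x]) ((hcmp hxy).resolve_left hx)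
  simpa only [bend, if_pos hu, if_pos hx] using h.Lpath_inter_subset hφ huv hxy hne hu hx

end Drawing

theorem stmt13_general [Fintype V] (P : Finset (ℝ × ℝ)) (hcard : P.card = Fintype.card V)
    (hP : IsDiagonal (P : Set (ℝ × ℝ))) (G : SimpleGraph V) [DecidableRel G.Adj]
    (hG : G.IsAcyclic) (hdeg : ∀ v, G.degree v ≤ 4) :
    ∃ (φ : V → ℝ × ℝ) (bend : V → V → Bool),
      Set.BijOn φ Set.univ ↑P ∧
      (∀ u v, G.Adj u v → Lpath (φ u) (φ v) (bend u v) = Lpath (φ v) (φ u) (bend v u)) ∧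
      ∀ u v x y, G.Adj u v → G.Adj x y → ({u, v} : Set V) ≠ {x, y} →
        Lpath (φ u) (φ v) (bend u v) ∩ Lpath (φ x) (φ y) (bend x y) ⊆
          φ '' (({u, v} : Set V) ∩ {x, y}) := by
  obtain ⟨f, c, hf⟩ := exists_isPortLayout_of_isAcyclic hG hdeg Finset.univ
  rw [Finset.coe_univ] at hf
  obtain ⟨φ, hbij, hlt⟩ :=
    exists_bijOn_forall_lt_iff_lt (Set.injOn_univ.1 hf.injOn) hP.injOn_fst hcard
  have hφ : IsDiagonal (Set.range φ) := by rwa [← Set.image_univ, hbij.image_eq]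
  obtain ⟨bend, hsymm, hplanar⟩ := (hf.of_lt_iff_lt hlt).exists_planar_bend hφ
  exact ⟨φ, bend, hbij, hsymm, hplanar⟩

/-- Every diagonal point set (no two points share an x- or y-coordinate, and sorting by
increasing x gives strictly decreasing y) of size `n` admits a planar L-shaped drawing of
any tree with `n` nodes and maximum degree 4: vertices go bijectively to the points, each
edge is drawn as an L-shaped path (consistently for both orientations of the edge), and
two distinct edges intersect only in the images of their common endpoints. -/
theorem stmt13 (n : ℕ) (P : Finset (ℝ × ℝ)) (hcard : P.card = n)
    (hgen : ∀ p ∈ P, ∀ q ∈ P, p ≠ q → p.1 ≠ q.1 ∧ p.2 ≠ q.2)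
    (hdiag : ∀ p ∈ P, ∀ q ∈ P, p.1 < q.1 → q.2 < p.2)
    (G : SimpleGraph (Fin n)) [DecidableRel G.Adj]
    (hT : G.IsTree) (hdeg : ∀ v : Fin n, G.degree v ≤ 4) :
    ∃ (φ : Fin n → ℝ × ℝ) (bend : Fin n → Fin n → Bool),
      Set.BijOn φ Set.univ ↑P ∧
      (∀ u v : Fin n, G.Adj u v →
        Lpath (φ u) (φ v) (bend u v) = Lpath (φ v) (φ u) (bend v u)) ∧
      (∀ u v x y : Fin n, G.Adj u v → G.Adj x y →
        ({u, v} : Set (Fin n)) ≠ ({x, y} : Set (Fin n)) →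
        Lpath (φ u) (φ v) (bend u v) ∩ Lpath (φ x) (φ y) (bend x y) ⊆
          φ '' (({u, v} : Set (Fin n)) ∩ ({x, y} : Set (Fin n)))) :=
  stmt13_general P (by simpa using hcard)
    { injOn_fst := fun p hp q hq h => by_contra fun hne => (hgen p hp q hq hne).1 h
      snd_lt_snd := fun p hp q hq => hdiag p hp q hq } G hT.isAcyclic hdeg
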